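/- arXiv:0707.4197 — 4 statements merged into one kernel-verified Lean document; each statement's English description precedes it below -/
import Mathlib

section
/- Let φ: R → S be a flat local homomorphism of Noetherian local rings satisfying condition (†), and let M be a finitely generated R-module. The following are equivalent: (1) M has a compatible S-module structure; (2) S = φ(R) + PS for every minimal prime P of Supp_R(M); (3) S = φ(R) + PS for every P ∈ Supp_R(M). -/
/-- An R-module `M` "has an S-module structure compatible with its R-module
structure" if there is an S-scalar multiplication on `M` satisfying the module
axioms and with `r • x = φ(r) ∘ x` for all `r : R`, `x : M`. -/
def HasCompatibleSModule (R S M : Type*) [CommRing R] [CommRing S] [Algebra R S]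
    [AddCommGroup M] [Module R M] : Prop :=
  ∃ smul : S → M → M,
    (∀ x, smul 1 x = x) ∧
    (∀ s t x, smul (s * t) x = smul s (smul t x)) ∧
    (∀ s x y, smul s (x + y) = smul s x + smul s y) ∧
    (∀ s t x, smul (s + t) x = smul s x + smul t x) ∧
    (∀ r : R, ∀ x, smul (algebraMap R S r) x = r • x)

/-!
`S = φ(R) + N` says that `1 : Submodule R S`, the image of `φ`, and `N` are codisjoint, and
compatible `S`-module structures on `M` are the `R`-algebra homomorphisms `S → End_R(M)`. All three
conditions are compared with `S = φ(R) + AS`, where `A = Ann_R(M)` is the kernel of `R → End_R(M)`.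

If `E = U + IE` and `E = U + N` then `E = U + I(U + N) = U + IN`. So the ideals `I` of `R` with
`S = φ(R) + IS` are closed under products, and since `A` contains a power of the product of its
minimal primes, it suffices to test the latter. For the same reason `S = φ(R) + K` implies
`S = φ(R) + 𝔪K`, whence `K = (K ∩ R)S + 𝔪K`, and `K` is extended from `R` by Nakayama's lemma over
`S`.

Given `ψ : S → End_R(M)`, Nakayama's lemma over `R` gives `S = φ(R) + ker ψ`, and `ker ψ`, being
extended from its contraction `A`, equals `AS`. Conversely, if `S = φ(R) + AS`, then faithful
flatness makes `R/A → S/AS` an isomorphism, and `S → S/AS ≃ R/A → End_R(M)` is the homomorphism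
sought.
-/

section CodisjointSubmodules

variable {R E : Type*}

theorem codisjoint_smul_of_codisjoint_smul_top [Semiring R] [AddCommMonoid E] [Module R E]
    {U N : Submodule R E} {I : Ideal R}
    (hI : Codisjoint U (I • ⊤)) (hN : Codisjoint U N) : Codisjoint U (I • N) := by
  have hU : U ⊔ I • U = U := sup_eq_left.mpr Submodule.smul_le_right
  rw [codisjoint_iff]
  calc U ⊔ I • N = U ⊔ I • (U ⊔ N) := by rw [Submodule.smul_sup, ← sup_assoc, hU]
    _ = ⊤ := by rw [hN.eq_top, hI.eq_top]

theorem codisjoint_mul_smul_top [Semiring R] [AddCommMonoid E] [Module R E]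
    {U : Submodule R E} {I J : Ideal R}
    (hI : Codisjoint U (I • ⊤)) (hJ : Codisjoint U (J • ⊤)) : Codisjoint U ((I * J) • ⊤) := by
  rw [Submodule.mul_smul]
  exact codisjoint_smul_of_codisjoint_smul_top hI hJ

theorem codisjoint_prod_smul_top [CommSemiring R] [AddCommMonoid E] [Module R E]
    {U : Submodule R E} {ι : Type*} {s : Finset ι} {I : ι → Ideal R}
    (h : ∀ i ∈ s, Codisjoint U (I i • ⊤)) : Codisjoint U ((∏ i ∈ s, I i) • ⊤) :=
  Finset.prod_induction I (fun J ↦ Codisjoint U (J • ⊤)) (fun _ _ ↦ codisjoint_mul_smul_top)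
    (by simpa only [Submodule.one_smul] using codisjoint_top_right) h

theorem codisjoint_smul_top_of_minimalPrimes [CommRing R] [IsNoetherianRing R] [AddCommMonoid E]
    [Module R E] {U : Submodule R E} {I : Ideal R}
    (h : ∀ p ∈ I.minimalPrimes, Codisjoint U (p • ⊤)) : Codisjoint U (I • ⊤) := by
  have hfin := I.finite_minimalPrimes_of_isNoetherianRing R
  obtain ⟨n, hn⟩ := I.exists_radical_pow_le_of_fg (IsNoetherian.noetherian _)
  have hprod : ∏ p ∈ hfin.toFinset, p ≤ I.radical := by
    rw [← Ideal.sInf_minimalPrimes]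
    exact le_sInf fun p hp ↦
      Ideal.prod_le_inf.trans (Finset.inf_le (f := id) (hfin.mem_toFinset.mpr hp))
  have hpow : ∏ _i ∈ Finset.range n, ∏ p ∈ hfin.toFinset, p ≤ I := by
    rw [Finset.prod_const, Finset.card_range]
    exact (Ideal.pow_right_mono hprod n).trans hn
  exact (codisjoint_prod_smul_top fun _ _ ↦ codisjoint_prod_smul_top fun p hp ↦
    h p (hfin.mem_toFinset.mp hp)).mono_right (Submodule.smul_mono_left hpow)

theorem codisjoint_ker_of_codisjoint_smul_top [CommRing R] [AddCommGroup E] [Module R E]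
    {F : Type*} [AddCommGroup F] [Module R F] [IsNoetherian R F] {I : Ideal R}
    (hI : I ≤ Ideal.jacobson ⊥) {U : Submodule R E} (hU : Codisjoint U (I • ⊤)) (f : E →ₗ[R] F) :
    Codisjoint U (LinearMap.ker f) := by
  have hrange : LinearMap.range f = U.map f ⊔ I • LinearMap.range f := by
    rw [LinearMap.range_eq_map, ← Submodule.map_smul'', ← Submodule.map_sup, hU.eq_top]
  have hle : LinearMap.range f ≤ U.map f :=
    Submodule.le_of_le_smul_of_le_jacobson_bot (IsNoetherian.noetherian _) hI hrange.le
  rw [codisjoint_iff, ← Submodule.comap_map_eq, eq_top_iff, ← Submodule.map_le_iff_le_comap,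
    ← LinearMap.range_eq_map]
  exact hle

end CodisjointSubmodules

section Support

variable {R M E : Type*} [CommRing R] [AddCommGroup M] [Module R M] [AddCommMonoid E] [Module R E]
  {U : Submodule R E}

theorem codisjoint_smul_top_of_mem_support (h : Codisjoint U (Module.annihilator R M • ⊤))
    {p : PrimeSpectrum R} (hp : p ∈ Module.support R M) : Codisjoint U (p.asIdeal • ⊤) :=
  h.mono_right (Submodule.smul_mono_left (Module.annihilator_le_of_mem_support hp))

theorem minimal_mem_support_of_mem_minimalPrimes_annihilator [Module.Finite R M] {p : Ideal R}
    (hp : p ∈ (Module.annihilator R M).minimalPrimes) :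
    Minimal (· ∈ Module.support R M) (⟨p, hp.1.1⟩ : PrimeSpectrum R) :=
  ⟨Module.mem_support_iff_of_finite.mpr hp.1.2,
    fun q hq hle ↦ hp.2 ⟨q.2, Module.mem_support_iff_of_finite.mp hq⟩ hle⟩

theorem codisjoint_annihilator_smul_top_of_minimal_mem_support [IsNoetherianRing R]
    [Module.Finite R M] (h : ∀ p : PrimeSpectrum R, Minimal (· ∈ Module.support R M) p →
      Codisjoint U (p.asIdeal • ⊤)) : Codisjoint U (Module.annihilator R M • ⊤) :=
  codisjoint_smul_top_of_minimalPrimes fun p hp ↦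
    h ⟨p, hp.1.1⟩ (minimal_mem_support_of_mem_minimalPrimes_annihilator hp)

end Support

section Algebras

variable {R S : Type*} [CommRing R] [CommRing S] [Algebra R S]

theorem codisjoint_one_iff {N : Submodule R S} :
    Codisjoint 1 N ↔ ∀ s : S, ∃ r : R, s - algebraMap R S r ∈ N := by
  rw [codisjoint_iff, Submodule.eq_top_iff']
  refine forall_congr' fun s ↦ ?_
  simp only [Submodule.mem_sup, Submodule.mem_one, exists_exists_eq_and]
  exact exists_congr fun r ↦
    ⟨fun ⟨_, hz, h⟩ ↦ by rwa [← h, add_sub_cancel_left], fun h ↦ ⟨_, h, add_sub_cancel _ s⟩⟩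

theorem codisjoint_one_smul_top_iff {I : Ideal R} :
    Codisjoint (1 : Submodule R S) (I • ⊤) ↔
      ∀ s : S, ∃ r : R, s - algebraMap R S r ∈ I.map (algebraMap R S) := by
  simp only [codisjoint_one_iff, Ideal.smul_top_eq_map, Submodule.restrictScalars_mem]

theorem le_map_comap_of_codisjoint_one {I : Ideal R}
    (hIS : I.map (algebraMap R S) ≤ Ideal.jacobson ⊥)
    (hI : Codisjoint (1 : Submodule R S) (I • ⊤)) {K : Ideal S} (hK : K.FG)
    (hRK : Codisjoint 1 (K.restrictScalars R)) :
    K ≤ (K.comap (algebraMap R S)).map (algebraMap R S) := by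
  refine Submodule.le_of_le_smul_of_le_jacobson_bot hK hIS fun k hk ↦ ?_
  obtain ⟨r, hr⟩ := codisjoint_one_iff.mp (codisjoint_smul_of_codisjoint_smul_top hI hRK) k
  rw [← Ideal.smul_restrictScalars, Submodule.restrictScalars_mem] at hr
  have hrK : algebraMap R S r ∈ K := by
    simpa only [sub_sub_cancel] using sub_mem hk (Submodule.smul_le_right hr)
  rw [← add_sub_cancel (algebraMap R S r) k]
  exact Submodule.add_mem_sup (Ideal.mem_map_of_mem _ hrK) hr

theorem comap_jacobson_bot_le_of_isLocalHom [IsLocalHom (algebraMap R S)] :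
    (Ideal.jacobson ⊥).comap (algebraMap R S) ≤ Ideal.jacobson ⊥ := by
  refine fun a ha ↦ Ideal.mem_jacobson_bot.mpr fun b ↦ isUnit_of_map_unit (algebraMap R S) _ ?_
  rw [map_add, map_mul, map_one]
  exact Ideal.mem_jacobson_bot.mp ha _

theorem codisjoint_one_ker_smul_top_of_algHom [IsNoetherianRing S] [IsLocalHom (algebraMap R S)]
    {B : Type*} [Ring B] [Algebra R B] [IsNoetherian R B] {I : Ideal R}
    (hIS : I.map (algebraMap R S) ≤ Ideal.jacobson ⊥)
    (hI : Codisjoint (1 : Submodule R S) (I • ⊤)) (ψ : S →ₐ[R] B) :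
    Codisjoint (1 : Submodule R S) (RingHom.ker (algebraMap R B) • ⊤) := by
  have hIR : I ≤ Ideal.jacobson ⊥ := (Ideal.map_le_iff_le_comap.mp hIS).trans
    comap_jacobson_bot_le_of_isLocalHom
  have hker : Codisjoint 1 ((RingHom.ker ψ).restrictScalars R) :=
    codisjoint_ker_of_codisjoint_smul_top hIR hI ψ.toLinearMap
  have hcomap : (RingHom.ker ψ).comap (algebraMap R S) = RingHom.ker (algebraMap R B) := by
    ext r
    simp only [Ideal.mem_comap, RingHom.mem_ker, AlgHom.commutes]
  rw [Ideal.smul_top_eq_map, ← hcomap]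
  exact hker.mono_right (le_map_comap_of_codisjoint_one hIS hI (IsNoetherian.noetherian _) hker)

theorem nonempty_algHom_of_codisjoint_one_smul_top [Module.FaithfullyFlat R S]
    {B : Type*} [Ring B] [Algebra R B] {A : Ideal R} (hA : A ≤ RingHom.ker (algebraMap R B))
    (h : Codisjoint (1 : Submodule R S) (A • ⊤)) : Nonempty (S →ₐ[R] B) := by
  let π : R →ₐ[R] S ⧸ A.map (algebraMap R S) := Algebra.ofId R _
  have hsurj : Function.Surjective π := fun y ↦ by
    obtain ⟨s, rfl⟩ := Ideal.Quotient.mk_surjective y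
    obtain ⟨r, hr⟩ := codisjoint_one_smul_top_iff.mp h s
    exact ⟨r, (Ideal.Quotient.mk_eq_mk_iff_sub_mem _ _ |>.mpr hr).symm⟩
  have hker : RingHom.ker π = A := by
    refine .trans ?_ (Ideal.comap_map_eq_self_of_faithfullyFlat (B := S) A)
    ext r
    exact Ideal.Quotient.eq_zero_iff_mem
  let ρ : R ⧸ RingHom.ker π →ₐ[R] B :=
    Ideal.Quotient.liftₐ _ (Algebra.ofId R B) fun r hr ↦ hA (hker.le hr)
  let e := Ideal.quotientKerAlgEquivOfSurjective hsurj
  exact ⟨ρ.comp (e.symm.toAlgHom.comp (Ideal.Quotient.mkₐ R _))⟩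

theorem nonempty_algHom_iff_codisjoint_one_ker_smul_top [IsNoetherianRing S]
    [Module.FaithfullyFlat R S] {B : Type*} [Ring B] [Algebra R B] [IsNoetherian R B] {I : Ideal R}
    (hIS : I.map (algebraMap R S) ≤ Ideal.jacobson ⊥)
    (hI : Codisjoint (1 : Submodule R S) (I • ⊤)) :
    Nonempty (S →ₐ[R] B) ↔
      Codisjoint (1 : Submodule R S) (RingHom.ker (algebraMap R B) • ⊤) :=
  ⟨fun ⟨ψ⟩ ↦ codisjoint_one_ker_smul_top_of_algHom hIS hI ψ,
    nonempty_algHom_of_codisjoint_one_smul_top le_rfl⟩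

end Algebras

section Modules

variable {R S M : Type*} [CommRing R] [CommRing S] [Algebra R S] [AddCommGroup M] [Module R M]

theorem hasCompatibleSModule_iff_nonempty_algHom :
    HasCompatibleSModule R S M ↔ Nonempty (S →ₐ[R] Module.End R M) := by
  constructor
  · rintro ⟨smul, one_smul, mul_smul, smul_add, add_smul, algebraMap_smul⟩
    have smul_smul_comm (s : S) (r : R) (x : M) : smul s (r • x) = r • smul s x := by
      rw [← algebraMap_smul, ← algebraMap_smul, ← mul_smul, mul_comm, mul_smul]
    let toEnd (s : S) : Module.End R M :=
      { toFun := smul s, map_add' := smul_add s, map_smul' := smul_smul_comm s }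
    have toEnd_algebraMap (r : R) : toEnd (algebraMap R S r) = algebraMap R (Module.End R M) r :=
      LinearMap.ext (algebraMap_smul r)
    exact ⟨{
      toFun := toEnd
      map_one' := LinearMap.ext one_smul
      map_mul' s t := LinearMap.ext (mul_smul s t)
      map_zero' := by simpa only [map_zero] using toEnd_algebraMap 0
      map_add' s t := LinearMap.ext (add_smul s t)
      commutes' := toEnd_algebraMap }⟩
  · rintro ⟨ψ⟩
    exact ⟨fun s x ↦ ψ s x, LinearMap.congr_fun (map_one ψ),
      fun s t ↦ LinearMap.congr_fun (map_mul ψ s t), fun s ↦ map_add (ψ s),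
      fun s t ↦ LinearMap.congr_fun (map_add ψ s t), fun r ↦ LinearMap.congr_fun (ψ.commutes r)⟩

theorem ker_algebraMap_end_eq_annihilator :
    RingHom.ker (algebraMap R (Module.End R M)) = Module.annihilator R M := by
  ext r
  simp only [RingHom.mem_ker, LinearMap.ext_iff, Module.algebraMap_end_apply, LinearMap.zero_apply,
    Module.mem_annihilator]

theorem hasCompatibleSModule_iff_codisjoint_annihilator [IsNoetherianRing R] [IsNoetherianRing S]
    [Module.FaithfullyFlat R S] [Module.Finite R M] {I : Ideal R}
    (hIS : I.map (algebraMap R S) ≤ Ideal.jacobson ⊥)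
    (hI : Codisjoint (1 : Submodule R S) (I • ⊤)) :
    HasCompatibleSModule R S M ↔
      Codisjoint (1 : Submodule R S) (Module.annihilator R M • ⊤) := by
  rw [hasCompatibleSModule_iff_nonempty_algHom,
    nonempty_algHom_iff_codisjoint_one_ker_smul_top hIS hI, ker_algebraMap_end_eq_annihilator]

end Modules

theorem stmt_13_general (R S : Type*) [CommRing R] [CommRing S]
    [IsNoetherianRing R] [IsNoetherianRing S] [Algebra R S] [Module.FaithfullyFlat R S]
    (I : Ideal R) (hIS : I.map (algebraMap R S) ≤ Ideal.jacobson ⊥)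
    (hI : ∀ s : S, ∃ r : R, s - algebraMap R S r ∈ I.map (algebraMap R S))
    (M : Type*) [AddCommGroup M] [Module R M] [Module.Finite R M] :
    (HasCompatibleSModule R S M ↔
      (∀ p : PrimeSpectrum R, Minimal (· ∈ Module.support R M) p →
        ∀ s : S, ∃ r : R, s - algebraMap R S r ∈ p.asIdeal.map (algebraMap R S))) ∧
    ((∀ p : PrimeSpectrum R, Minimal (· ∈ Module.support R M) p →
        ∀ s : S, ∃ r : R, s - algebraMap R S r ∈ p.asIdeal.map (algebraMap R S)) ↔
      (∀ p ∈ Module.support R M,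
        ∀ s : S, ∃ r : R, s - algebraMap R S r ∈ p.asIdeal.map (algebraMap R S))) := by
  rw [hasCompatibleSModule_iff_codisjoint_annihilator hIS (codisjoint_one_smul_top_iff.mpr hI)]
  simp only [← codisjoint_one_smul_top_iff]
  exact ⟨⟨fun h _ hp ↦ codisjoint_smul_top_of_mem_support h hp.prop,
      codisjoint_annihilator_smul_top_of_minimal_mem_support⟩,
    ⟨fun h _ ↦ codisjoint_smul_top_of_mem_support
        (codisjoint_annihilator_smul_top_of_minimal_mem_support h),
      fun h p hp ↦ h p hp.prop⟩⟩

theorem stmt_13 (R S : Type*) [CommRing R] [CommRing S]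
    [IsNoetherianRing R] [IsNoetherianRing S] [IsLocalRing R] [IsLocalRing S]
    [Algebra R S] [Module.Flat R S] [IsLocalHom (algebraMap R S)]
    (h1 : (IsLocalRing.maximalIdeal R).map (algebraMap R S) = IsLocalRing.maximalIdeal S)
    (h2 : ∀ s : S, ∃ r : R, s - algebraMap R S r ∈ IsLocalRing.maximalIdeal S)
    (M : Type*) [AddCommGroup M] [Module R M] [Module.Finite R M] :
    (HasCompatibleSModule R S M ↔
      (∀ p : PrimeSpectrum R, Minimal (· ∈ Module.support R M) p →
        ∀ s : S, ∃ r : R, s - algebraMap R S r ∈ p.asIdeal.map (algebraMap R S))) ∧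
    ((∀ p : PrimeSpectrum R, Minimal (· ∈ Module.support R M) p →
        ∀ s : S, ∃ r : R, s - algebraMap R S r ∈ p.asIdeal.map (algebraMap R S)) ↔
      (∀ p ∈ Module.support R M,
        ∀ s : S, ∃ r : R, s - algebraMap R S r ∈ p.asIdeal.map (algebraMap R S))) := by
  have : Module.FaithfullyFlat R S := Module.FaithfullyFlat.of_flat_of_isLocalHom
  exact stmt_13_general R S _ (h1.trans_le (IsLocalRing.maximalIdeal_le_jacobson _)) (by rwa [h1]) M
end

section
/- Let φ: R → S be a flat local homomorphism of Noetherian local rings satisfying condition (†), and let M be a finitely generated R-module that admits an S-module structure compatible with its R-module structure via φ. Then Ext^i_R(S, M) = 0 for all i > 0. -/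
open CategoryTheory

/-!
Let `J = Ann_S M` and `I = Ann_R M`. Since `S ⧸ J` embeds in `End_R M`, it is finite over `R`, so
Nakayama's lemma gives `S = φ(R) + J`. If `M ≠ 0`, then `J ⊆ 𝔪S`, and `𝔪S ⊆ φ(R) + 𝔪J` yields
`J ⊆ IS + 𝔪J`; by Nakayama again, `J = IS`. Hence `(R ⧸ I) ⊗ S ≅ S ⧸ J ≅ R ⧸ I`.

Write `A = R ⧸ I`. The syzygies of the flat module `S` are flat, so their defining sequences remain
exact after applying `A ⊗ -`; there they split, starting from the free module `A ⊗ S`. As `M` is an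
`A`-module, every map from a syzygy to `M` therefore extends to the ambient projective module, which
is the vanishing of `Ext`.
-/

open TensorProduct

theorem HasCompatibleSModule.exists_module {R S M : Type*} [CommRing R] [CommRing S]
    [Algebra R S] [AddCommGroup M] [Module R M] (hM : HasCompatibleSModule R S M) :
    ∃ _ : Module S M, IsScalarTower R S M := by
  obtain ⟨smul, one_smul, mul_smul, smul_add, add_smul, algebraMap_smul⟩ := hM
  let : SMul S M := ⟨smul⟩
  let : Module S M := .ofMinimalAxioms smul_add add_smul mul_smul one_smul
  exact ⟨inferInstance, .of_algebraMap_smul algebraMap_smul⟩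

section Ideals

variable {R S : Type*} [CommRing R] [CommRing S] [Algebra R S]

theorem algebraMap_quotient_surjective_of_finite {𝔞 : Ideal R} {J : Ideal S}
    [Module.Finite R (S ⧸ J)] (h𝔞 : 𝔞 ≤ Ideal.jacobson ⊥)
    (hS : ∀ s : S, ∃ r : R, s - algebraMap R S r ∈ 𝔞.map (algebraMap R S)) :
    Function.Surjective (algebraMap R (S ⧸ J)) := by
  refine LinearMap.surjective_of_surjective_comp_mkQ (Algebra.linearMap R (S ⧸ J)) 𝔞 h𝔞 ?_
  refine (Submodule.mkQ_surjective _).forall.2 (Ideal.Quotient.mk_surjective.forall.2 fun s ↦ ?_)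
  obtain ⟨r, hr⟩ := hS s
  refine ⟨r, Eq.symm ((Submodule.Quotient.eq _).2 ?_)⟩
  rw [← Submodule.restrictScalars_mem R, ← Ideal.smul_top_eq_map] at hr
  have := Submodule.mem_map_of_mem (f := (Ideal.Quotient.mkₐ R J).toLinearMap) hr
  rw [Submodule.map_smul''] at this
  exact Submodule.smul_mono le_rfl le_top this

theorem map_le_one_sup_map_mul_of_surjective_quotient {𝔞 : Ideal R} {J : Ideal S}
    (hsurj : Function.Surjective (algebraMap R (S ⧸ J))) :
    (𝔞.map (algebraMap R S)).restrictScalars R ≤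
      1 ⊔ (𝔞.map (algebraMap R S) * J).restrictScalars R := by
  have top_le : (⊤ : Submodule R S) ≤ 1 ⊔ J.restrictScalars R := fun s _ ↦ by
    obtain ⟨r, hr⟩ := hsurj (Ideal.Quotient.mk J s)
    rw [← sub_add_cancel s (algebraMap R S r), add_comm]
    exact Submodule.add_mem_sup (Submodule.mem_one.2 ⟨r, rfl⟩) (Ideal.Quotient.eq.1 hr.symm)
  have smul_le : 𝔞 • J.restrictScalars R ≤ (𝔞.map (algebraMap R S) * J).restrictScalars R :=
    Submodule.smul_le.2 fun r hr j hj ↦ by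
      rw [Algebra.smul_def]
      exact Ideal.mul_mem_mul (Ideal.mem_map_of_mem _ hr) hj
  calc
    (𝔞.map (algebraMap R S)).restrictScalars R = 𝔞 • ⊤ := (Ideal.smul_top_eq_map 𝔞).symm
    _ ≤ 𝔞 • (1 ⊔ J.restrictScalars R) := Submodule.smul_mono le_rfl top_le
    _ = 𝔞 • 1 ⊔ 𝔞 • J.restrictScalars R := Submodule.smul_sup ..
    _ ≤ 1 ⊔ (𝔞.map (algebraMap R S) * J).restrictScalars R :=
      sup_le_sup Submodule.smul_le_right smul_le

theorem map_comap_eq_of_surjective_quotient {𝔞 : Ideal R} {J : Ideal S} (hJ : J.FG)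
    (hsurj : Function.Surjective (algebraMap R (S ⧸ J)))
    (hJ𝔞 : J ≤ 𝔞.map (algebraMap R S)) (h𝔞 : 𝔞.map (algebraMap R S) ≤ Ideal.jacobson ⊥) :
    (J.comap (algebraMap R S)).map (algebraMap R S) = J := by
  have le_sup : J ≤ (J.comap (algebraMap R S)).map (algebraMap R S) ⊔
      𝔞.map (algebraMap R S) • J := fun j hj ↦ by
    obtain ⟨_, hr, t, ht, rfl⟩ :=
      Submodule.mem_sup.1 (map_le_one_sup_map_mul_of_surjective_quotient hsurj (hJ𝔞 hj))
    obtain ⟨r, rfl⟩ := Submodule.mem_one.1 hr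
    have hrJ : algebraMap R S r ∈ J := (J.add_mem_iff_left (Ideal.mul_le_right ht)).1 hj
    exact Submodule.add_mem_sup (Ideal.mem_map_of_mem _ hrJ) ht
  exact le_antisymm Ideal.map_comap_le (Submodule.le_of_le_smul_of_le_jacobson_bot hJ h𝔞 le_sup)

theorem free_quotient_tensorProduct {I : Ideal R} {J : Ideal S}
    (hcomap : J.comap (algebraMap R S) = I) (hmap : I.map (algebraMap R S) = J)
    (hsurj : Function.Surjective (algebraMap R (S ⧸ J))) :
    Module.Free (R ⧸ I) ((R ⧸ I) ⊗[R] S) := by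
  have hker : RingHom.ker (Algebra.ofId R (S ⧸ J)) = I := by
    rw [← hcomap]
    ext r
    exact Ideal.Quotient.eq_zero_iff_mem
  let e : (R ⧸ I) ≃ₗ[R] (R ⧸ I) ⊗[R] S :=
    (Ideal.quotientEquivAlgOfEq R hker).symm.toLinearEquiv ≪≫ₗ
    (Ideal.quotientKerAlgEquivOfSurjective hsurj).toLinearEquiv ≪≫ₗ
    (Submodule.Quotient.restrictScalarsEquiv R J).symm ≪≫ₗ
    Submodule.quotEquivOfEq _ _ (by rw [Ideal.smul_top_eq_map, hmap]) ≪≫ₗ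
    (quotTensorEquivQuotSMul S I).symm
  exact .of_equiv (e.extendScalarsOfSurjective Ideal.Quotient.mk_surjective)

end Ideals

section Annihilator

variable (R S M : Type*) [CommRing R] [CommRing S] [Algebra R S] [AddCommGroup M] [Module R M]
  [Module S M] [IsScalarTower R S M]

instance finite_quotient_annihilator [IsNoetherianRing R] [Module.Finite R M] :
    Module.Finite R (S ⧸ Module.annihilator S M) := by
  have hker (s : S) : s ∈ Module.annihilator S M ↔ Algebra.lsmul R R M s = 0 := by
    simp [Module.mem_annihilator, LinearMap.ext_iff]
  let f := Ideal.Quotient.liftₐ (Module.annihilator S M) (Algebra.lsmul R R M) fun s ↦ (hker s).1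
  have hf : Function.Injective f :=
    Ideal.injective_lift_iff _ |>.2 (Ideal.ext fun s ↦ (hker s).symm)
  exact .of_injective f.toLinearMap hf

end Annihilator

section FlatSequences

variable {R K P F : Type*} [CommRing R] [AddCommGroup K] [Module R K] [AddCommGroup P]
  [Module R P] [AddCommGroup F] [Module R F] {i : K →ₗ[R] P} {g : P →ₗ[R] F}

theorem flat_of_shortExact [Module.Flat R P] [Module.Flat R F] (hi : Function.Injective i)
    (hig : Function.Exact i g) (hg : Function.Surjective g) : Module.Flat R K := by
  rw [Module.Flat.iff_rTensor_preserves_injective_linearMap]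
  intro N N' _ _ _ _ u hu
  have hcomm : i.lTensor N' ∘ₗ u.rTensor K = u.rTensor P ∘ₗ i.lTensor N := by
    rw [LinearMap.lTensor_comp_rTensor, LinearMap.rTensor_comp_lTensor]
  have hinj : Function.Injective (u.rTensor P ∘ₗ i.lTensor N) :=
    (Module.Flat.rTensor_preserves_injective_linearMap u hu).comp
      (LinearMap.lTensor_injective_of_exact_of_flat g hg i hi hig N)
  rw [← hcomm] at hinj
  exact .of_comp (f := i.lTensor N') hinj

variable (A : Type*) [CommRing A] [Algebra R A] [Module.Flat R F] [Module.Projective A (A ⊗[R] F)]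

theorem exists_leftInverse_baseChange (hi : Function.Injective i)
    (hig : Function.Exact i g) (hg : Function.Surjective g) :
    ∃ l, l ∘ₗ i.baseChange A = LinearMap.id := by
  have hi' : Function.Injective (i.baseChange A) :=
    LinearMap.lTensor_injective_of_exact_of_flat g hg i hi hig A
  have hig' : Function.Exact (i.baseChange A) (g.baseChange A) := lTensor_exact A hig hg
  have hg' : Function.Surjective (g.baseChange A) := LinearMap.lTensor_surjective A hg
  exact ((hig'.split_tfae hi' hg').out 0 1).1
    (Module.projective_lifting_property (g.baseChange A) LinearMap.id hg')

theorem projective_baseChange_of_shortExact [Module.Projective R P] (hi : Function.Injective i)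
    (hig : Function.Exact i g) (hg : Function.Surjective g) :
    Module.Projective A (A ⊗[R] K) := by
  obtain ⟨l, hl⟩ := exists_leftInverse_baseChange A hi hig hg
  exact .of_split _ l hl

theorem lcomp_surjective_of_projective_baseChange (M : Type*) [AddCommGroup M] [Module R M]
    [Module A M] [IsScalarTower R A M] (hi : Function.Injective i)
    (hig : Function.Exact i g) (hg : Function.Surjective g) :
    Function.Surjective (i.lcomp R M) := by
  intro f
  obtain ⟨l, hl⟩ := exists_leftInverse_baseChange A hi hig hg
  refine ⟨(f.liftBaseChange A ∘ₗ l).restrictScalars R ∘ₗ TensorProduct.mk R A P 1, ?_⟩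
  ext x
  have hx : l (1 ⊗ₜ[R] i x) = 1 ⊗ₜ[R] x := by simpa using LinearMap.congr_fun hl (1 ⊗ₜ[R] x)
  simp [hx]

end FlatSequences

section Syzygies

variable {R P₂ P₁ P₀ : Type*} [CommRing R] [AddCommGroup P₂] [Module R P₂] [AddCommGroup P₁]
  [Module R P₁] [AddCommGroup P₀] [Module R P₀] {f : P₂ →ₗ[R] P₁} {g : P₁ →ₗ[R] P₀}

theorem exact_rangeRestrict (h : Function.Exact f g) : Function.Exact f g.rangeRestrict := by
  rwa [LinearMap.exact_iff, LinearMap.ker_rangeRestrict, ← LinearMap.exact_iff]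

variable [Module.Flat R (P₀ ⧸ LinearMap.range g)]

theorem flat_coker_of_exact [Module.Flat R P₀] (h : Function.Exact f g) :
    Module.Flat R (P₁ ⧸ LinearMap.range f) :=
  have : Module.Flat R (LinearMap.range g) := flat_of_shortExact Subtype.val_injective
    (LinearMap.exact_subtype_mkQ _) (Submodule.mkQ_surjective _)
  .of_linearEquiv ((exact_rangeRestrict h).linearEquivOfSurjective g.surjective_rangeRestrict)

variable (A : Type*) [CommRing A] [Algebra R A]
  [Module.Projective A (A ⊗[R] (P₀ ⧸ LinearMap.range g))]

theorem projective_baseChange_coker_of_exact [Module.Projective R P₀] (h : Function.Exact f g) :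
    Module.Projective A (A ⊗[R] (P₁ ⧸ LinearMap.range f)) :=
  have : Module.Projective A (A ⊗[R] LinearMap.range g) :=
    projective_baseChange_of_shortExact A Subtype.val_injective
      (LinearMap.exact_subtype_mkQ _) (Submodule.mkQ_surjective _)
  .of_equiv (((exact_rangeRestrict h).linearEquivOfSurjective
    g.surjective_rangeRestrict).symm.baseChange R A _ _)

theorem exact_lcomp_of_projective_baseChange_coker (M : Type*) [AddCommGroup M] [Module R M]
    [Module A M] [IsScalarTower R A M] (h : Function.Exact f g) :
    Function.Exact (g.lcomp R M) (f.lcomp R M) := by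
  have hrestrict := LinearMap.exact_lcomp_of_exact_of_surjective M (exact_rangeRestrict h)
    g.surjective_rangeRestrict
  have hextend : Function.Surjective ((LinearMap.range g).subtype.lcomp R M) :=
    lcomp_surjective_of_projective_baseChange A M Subtype.val_injective
      (LinearMap.exact_subtype_mkQ _) (Submodule.mkQ_surjective _)
  exact hextend.comp_exact_iff_exact.2 hrestrict

end Syzygies

section Ext

universe u v w

variable {R : Type u} [CommRing R] {F : Type v} [AddCommGroup F] [Module R F]
  (P : ProjectiveResolution (ModuleCat.of R F))

theorem exact_resolution_d (n : ℕ) :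
    Function.Exact (P.complex.d (n + 2) (n + 1)).hom (P.complex.d (n + 1) n).hom :=
  (ShortComplex.ShortExact.moduleCat_exact_iff_function_exact _).1 (P.exact_succ n)

/-- The identification of the cokernel of `P₁ ⟶ P₀` with the module resolved by `P`, induced by the
augmentation `P₀ ⟶ F`. -/
noncomputable def resolutionCokerEquiv :
    (P.complex.X 0 ⧸ LinearMap.range (P.complex.d 1 0).hom) ≃ₗ[R] F :=
  Function.Exact.linearEquivOfSurjective (g := (P.π.f 0).hom)
    ((ShortComplex.ShortExact.moduleCat_exact_iff_function_exact _).1 P.exact₀)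
    ((ModuleCat.epi_iff_surjective (P.π.f 0)).1 inferInstance)

variable [Small.{v} R]

instance projective_resolution_X (n : ℕ) : Module.Projective R (P.complex.X n) :=
  (IsProjective.iff_projective _).2 (P.projective n)

variable [Module.Flat R F]

instance flat_resolution_coker (n : ℕ) :
    Module.Flat R (P.complex.X n ⧸ LinearMap.range (P.complex.d (n + 1) n).hom) := by
  induction n with
  | zero => exact .of_linearEquiv (resolutionCokerEquiv P)
  | succ n ih => exact flat_coker_of_exact (exact_resolution_d P n)

variable (A : Type w) [CommRing A] [Algebra R A] [Module.Projective A (A ⊗[R] F)]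

theorem projective_baseChange_resolution_coker (n : ℕ) : Module.Projective A
    (A ⊗[R] (P.complex.X n ⧸ LinearMap.range (P.complex.d (n + 1) n).hom)) := by
  induction n with
  | zero => exact .of_equiv ((resolutionCokerEquiv P).symm.baseChange R A _ _)
  | succ n ih => exact projective_baseChange_coker_of_exact A (exact_resolution_d P n)

variable (F) in
theorem subsingleton_Ext_of_projective_baseChange (M : Type v) [AddCommGroup M] [Module R M]
    [Module A M] [IsScalarTower R A M] (n : ℕ) :
    Subsingleton (((Ext R (ModuleCat.{v} R) (n + 1)).obj (Opposite.op (ModuleCat.of R F))).obj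
      (ModuleCat.of R M)) := by
  let P := ProjectiveResolution.of (ModuleCat.of R F)
  have := projective_baseChange_resolution_coker P A n
  have hexact := exact_lcomp_of_projective_baseChange_coker A M (exact_resolution_d P n)
  rw [← ModuleCat.isZero_iff_subsingleton]
  refine Limits.IsZero.of_iso ?_ (P.isoExt (n + 1) (ModuleCat.of R M))
  rw [← HomologicalComplex.exactAt_iff_isZero_homology,
    HomologicalComplex.exactAt_iff' _ n (n + 1) (n + 2) (by simp) (by simp),
    ShortComplex.moduleCat_exact_iff]
  intro (x : P.complex.X (n + 1) ⟶ ModuleCat.of R M) hx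
  obtain ⟨h, hh⟩ := (hexact x.hom).1 (congrArg ModuleCat.Hom.hom hx)
  exact ⟨ModuleCat.ofHom h, ModuleCat.hom_ext hh⟩

end Ext

section Local

open IsLocalRing

variable {R S M : Type*} [CommRing R] [CommRing S] [IsNoetherianRing R] [IsNoetherianRing S]
  [IsLocalRing R] [IsLocalRing S] [Algebra R S] [AddCommGroup M] [Module R M] [Module.Finite R M]
  [Module S M] [IsScalarTower R S M]

theorem free_quotient_annihilator_tensorProduct
    (h1 : (maximalIdeal R).map (algebraMap R S) = maximalIdeal S)
    (h2 : ∀ s : S, ∃ r : R, s - algebraMap R S r ∈ maximalIdeal S) :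
    Module.Free (R ⧸ Module.annihilator R M) ((R ⧸ Module.annihilator R M) ⊗[R] S) := by
  have hsurj : Function.Surjective (algebraMap R (S ⧸ Module.annihilator S M)) :=
    algebraMap_quotient_surjective_of_finite (maximalIdeal_le_jacobson ⊥) (h1 ▸ h2)
  have hcomap : (Module.annihilator S M).comap (algebraMap R S) = Module.annihilator R M :=
    Module.comap_annihilator
  refine free_quotient_tensorProduct hcomap ?_ hsurj
  rw [← hcomap]
  rcases eq_or_ne (Module.annihilator S M) ⊤ with htop | htop
  · rw [htop, Ideal.comap_top, Ideal.map_top]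
  · exact map_comap_eq_of_surjective_quotient (IsNoetherian.noetherian _) hsurj
      ((le_maximalIdeal htop).trans_eq h1.symm) (h1 ▸ maximalIdeal_le_jacobson ⊥)

end Local

theorem stmt_14 (R S : Type) [CommRing R] [CommRing S]
    [IsNoetherianRing R] [IsNoetherianRing S] [IsLocalRing R] [IsLocalRing S]
    [Algebra R S] [Module.Flat R S] [IsLocalHom (algebraMap R S)]
    (h1 : (IsLocalRing.maximalIdeal R).map (algebraMap R S) = IsLocalRing.maximalIdeal S)
    (h2 : ∀ s : S, ∃ r : R, s - algebraMap R S r ∈ IsLocalRing.maximalIdeal S)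
    (M : Type) [AddCommGroup M] [Module R M] [Module.Finite R M]
    (hM : HasCompatibleSModule R S M) :
    ∀ i : ℕ, 0 < i →
      Subsingleton
        (((Ext R (ModuleCat R) i).obj (Opposite.op (ModuleCat.of R S))).obj
          (ModuleCat.of R M)) := by
  intro i hi
  obtain ⟨n, rfl⟩ := Nat.exists_eq_add_one_of_ne_zero hi.ne'
  obtain ⟨_, _⟩ := hM.exists_module
  have : Module.Free (R ⧸ Module.annihilator R M) ((R ⧸ Module.annihilator R M) ⊗[R] S) :=
    free_quotient_annihilator_tensorProduct h1 h2
  have htors := Module.isTorsionBySet_annihilator R M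
  let : Module (R ⧸ Module.annihilator R M) M := htors.module
  have : IsScalarTower R (R ⧸ Module.annihilator R M) M := htors.isScalarTower
  exact subsingleton_Ext_of_projective_baseChange S (R ⧸ Module.annihilator R M) M n
end

section
/- Let φ: R → S be a flat local homomorphism of Noetherian local rings satisfying condition (†), and let M be a finitely generated R-module. If Ext^i_R(S, M) is finitely generated as an R-module for i = 1, …, dim_R(M), then the evaluation map Hom_R(S,M) → M, ψ ↦ ψ(1), is bijective (equivalently, M has a compatible S-module structure). -/
open CategoryTheory

/-!
Let `C = S / R`, so that `0 → R → S → C → 0` is exact. Since `S` is faithfully flat, `C` is flat: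
the sequence splits after base change to `S`. Condition (†) gives `𝔪 C = C`, hence `Hom(C, M) = 0`
by Krull's intersection theorem, and it remains to see that `Ext¹(C, M) = 0`.

The hypothesis makes `Extⁱ(C, M)` finitely generated for `1 ≤ i ≤ dim M`. For a flat module `X`,
`Extⁱ(X, N)` vanishes in positive degrees when `N` is a vector space over `R / 𝔪`, hence when `N` is
killed by a power of `𝔪`; so we may replace `M` by its quotient by its `𝔪`-power torsion. Some
`x ∈ 𝔪` is then a nonzerodivisor on `M`, the hypothesis passes to `M / xM`, whose dimension is
smaller, and Nakayama's lemma lifts `Ext¹(X, M / xM) = 0` to `Ext¹(X, M) = 0`.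
-/

universe w v u

section Flatness

open TensorProduct

variable {R : Type*} [CommRing R]

lemma flat_ker_of_surjective {B C : Type*} [AddCommGroup B] [AddCommGroup C] [Module R B]
    [Module R C] [Module.Flat R B] [Module.Flat R C] (g : B →ₗ[R] C)
    (hg : Function.Surjective g) : Module.Flat R (LinearMap.ker g) := by
  rw [Module.Flat.iff_lTensor_preserves_injective_linearMap]
  intro N P _ _ _ _ f hf
  let ι := (LinearMap.ker g).subtype
  have hι : Function.Injective (ι.rTensor N) :=
    (ι.lTensor_inj_iff_rTensor_inj N).1 <| LinearMap.lTensor_injective_of_exact_of_flat g hg ι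
      (LinearMap.ker g).subtype_injective (LinearMap.exact_subtype_ker_map g) N
  refine .of_comp (f := ι.rTensor P) ?_
  rw [← LinearMap.coe_comp, LinearMap.rTensor_comp_lTensor, ← LinearMap.lTensor_comp_rTensor]
  exact (Module.Flat.lTensor_preserves_injective_linearMap f hf).comp hι

variable (R) in
/-- The `R`-module `S / R`: the cokernel of the structure map of an `R`-algebra `S`. -/
abbrev UnitCokernel (S : Type*) [CommRing S] [Algebra R S] : Type _ :=
  S ⧸ LinearMap.range (Algebra.linearMap R S)

variable (R) in
-- `s ↦ 1 ⊗ s - s ⊗ 1` kills `R`, and so induces a section of `S ⊗ S → S ⊗ (S / R)`.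
lemma flat_unitCokernel (S : Type*) [CommRing S] [Algebra R S] [Module.FaithfullyFlat R S] :
    Module.Flat R (UnitCokernel R S) := by
  let R' := LinearMap.range (Algebra.linearMap R S)
  let σ : S ⧸ R' →ₗ[R] S ⊗[R] S :=
    R'.liftQ (-Algebra.TensorProduct.includeLeftSubRight R S) <| by
      rintro _ ⟨r, rfl⟩
      simpa using Algebra.TensorProduct.includeLeftSubRight_algebraMap_zero r
  have hσ : R'.mkQ.baseChange S ∘ₗ σ.liftBaseChange S = LinearMap.id := by
    ext s
    have h_one : R'.mkQ 1 = 0 := (Submodule.Quotient.mk_eq_zero R').2 ⟨1, by simp⟩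
    have h_sub : σ (R'.mkQ s) = 1 ⊗ₜ s - s ⊗ₜ 1 := neg_sub (s ⊗ₜ 1) (1 ⊗ₜ s)
    have h_section : R'.mkQ.baseChange S (σ (R'.mkQ s)) = 1 ⊗ₜ R'.mkQ s := by
      rw [h_sub, map_sub, LinearMap.baseChange_tmul, LinearMap.baseChange_tmul, h_one,
        TensorProduct.tmul_zero, sub_zero]
    simpa using h_section
  have : Module.Flat S (S ⊗[R] (S ⧸ R')) := Module.Flat.of_retract _ _ hσ
  exact Module.Flat.of_flat_tensorProduct R _ S

lemma exists_comp_eq_of_baseChange_injective {K A B N : Type*} [Field K] [Algebra R K]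
    [AddCommGroup A] [Module R A] [AddCommGroup B] [Module R B] [AddCommGroup N] [Module R N]
    [Module K N] [IsScalarTower R K N] {ι : A →ₗ[R] B}
    (hι : Function.Injective (ι.baseChange K)) (f : A →ₗ[R] N) :
    ∃ g : B →ₗ[R] N, g ∘ₗ ι = f := by
  obtain ⟨ρ, hρ⟩ := (ι.baseChange K).exists_leftInverse_of_injective (LinearMap.ker_eq_bot.2 hι)
  refine ⟨((f.liftBaseChange K ∘ₗ ρ).restrictScalars R) ∘ₗ TensorProduct.mk R K B 1, ?_⟩
  ext a
  have : ρ (1 ⊗ₜ ι a) = 1 ⊗ₜ a := by simpa using congr($hρ (1 ⊗ₜ a))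
  simp [this]

end Flatness

section Torsion

variable {R M : Type*} [CommRing R] [AddCommGroup M] [Module R M]

lemma mem_torsionBySet_mul_iff {I J : Ideal R} {y : M} :
    y ∈ Submodule.torsionBySet R M (I * J : Ideal R) ↔
      ∀ b ∈ J, b • y ∈ Submodule.torsionBySet R M I := by
  simp only [Submodule.mem_torsionBySet_iff, Subtype.forall, SetLike.mem_coe, smul_smul]
  refine ⟨fun h b hb a ha ↦ h _ (Ideal.mul_mem_mul ha hb), fun h c hc ↦ ?_⟩
  induction hc using Submodule.mul_induction_on' with
  | mem_mul_mem a ha b hb => exact h b hb a ha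
  | add c _ d _ hc hd => rw [add_smul, hc, hd, add_zero]

lemma isTorsionBySet_quotient_torsionBySet {I J : Ideal R}
    (hM : Module.IsTorsionBySet R M (I * J : Ideal R)) :
    Module.IsTorsionBySet R (M ⧸ Submodule.torsionBySet R M I) J :=
  (Module.isTorsionBySet_quotient_iff _ _).2 fun x b hb ↦
    mem_torsionBySet_mul_iff.1 ((Submodule.mem_torsionBySet_iff _ _).2 (@hM x)) b hb

variable (M) in
lemma exists_isSMulRegular_quotient_torsionBySet_pow [IsNoetherianRing R] [Module.Finite R M]
    (I : Ideal R) :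
    ∃ k, ∃ x ∈ I, IsSMulRegular (M ⧸ Submodule.torsionBySet R M (I ^ k : Ideal R)) x := by
  obtain ⟨k, hk⟩ := monotone_stabilizes_iff_noetherian.2 inferInstance
    ⟨fun k ↦ Submodule.torsionBySet R M (I ^ k : Ideal R),
      fun i j h ↦ Submodule.torsionBySet_le_torsionBySet_pow i j h I⟩
  let N := Submodule.torsionBySet R M (I ^ k : Ideal R)
  have : Subsingleton ((R ⧸ I) →ₗ[R] M ⧸ N) := by
    refine subsingleton_of_forall_eq 0 fun f ↦ ?_
    ext
    obtain ⟨y, hy⟩ := N.mkQ_surjective (f 1)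
    have h_smul_mem : ∀ b ∈ I, b • y ∈ N := fun b hb ↦ by
      have h_smul_one : b • (1 : R ⧸ I) = 0 := Ideal.Quotient.eq_zero_iff_mem.2 (by simpa using hb)
      rw [← Submodule.Quotient.mk_eq_zero, ← Submodule.mkQ_apply, map_smul, hy, ← map_smul,
        h_smul_one, map_zero]
    have hyN : y ∈ N := by
      refine (hk (k + 1) k.le_succ).ge (?_ : y ∈ Submodule.torsionBySet R M (I ^ (k + 1) : Ideal R))
      rwa [pow_succ, mem_torsionBySet_mul_iff]
    simpa [← hy] using hyN
  obtain ⟨x, hx, hreg⟩ := IsSMulRegular.subsingleton_linearMap_iff.1 this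
  exact ⟨k, x, by rwa [Ideal.annihilator_quotient] at hx, hreg⟩

end Torsion

section ShortExact

variable {R : Type u} [CommRing R] {M N : Type v} [AddCommGroup M] [Module R M] [AddCommGroup N]
  [Module R N]

lemma shortExact_subtype_mkQ (P : Submodule R M) :
    (ModuleCat.shortComplexOfCompEqZero P.subtype P.mkQ
      (LinearMap.exact_subtype_mkQ P).linearMap_comp_eq_zero).ShortExact :=
  ModuleCat.shortComplex_shortExact _ (LinearMap.exact_subtype_mkQ P) P.subtype_injective
    P.mkQ_surjective

lemma shortExact_mkQ_range {f : M →ₗ[R] N} (hf : Function.Injective f) :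
    (ModuleCat.shortComplexOfCompEqZero f (LinearMap.range f).mkQ
      f.exact_map_mkQ_range.linearMap_comp_eq_zero).ShortExact :=
  ModuleCat.shortComplex_shortExact _ f.exact_map_mkQ_range hf (Submodule.mkQ_surjective _)

end ShortExact

section LongExactSequences

variable {C : Type u} [Category.{v} C] [Abelian C] [HasExt.{w} C] {T : ShortComplex C}

lemma subsingleton_ext_succ_of_projective_X₂ (hT : T.ShortExact) [Projective T.X₂] (Y : C) (n : ℕ)
    [Subsingleton (Abelian.Ext T.X₁ Y n)] : Subsingleton (Abelian.Ext T.X₃ Y (n + 1)) := by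
  refine subsingleton_of_forall_eq 0 fun α ↦ ?_
  obtain ⟨β, rfl⟩ := Abelian.Ext.contravariant_sequence_exact₃ hT Y α
    (Abelian.Ext.eq_zero_of_projective _) (add_comm 1 n)
  rw [Subsingleton.elim β 0, Abelian.Ext.comp_zero]

lemma subsingleton_ext_one_of_projective_X₂ (hT : T.ShortExact) [Projective T.X₂] {Y : C}
    (hY : ∀ f : T.X₁ ⟶ Y, ∃ g : T.X₂ ⟶ Y, T.f ≫ g = f) :
    Subsingleton (Abelian.Ext T.X₃ Y 1) := by
  refine subsingleton_of_forall_eq 0 fun α ↦ ?_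
  obtain ⟨β, rfl⟩ := Abelian.Ext.contravariant_sequence_exact₃ hT Y α
    (Abelian.Ext.eq_zero_of_projective _) (add_zero 1)
  obtain ⟨f, rfl⟩ := Abelian.Ext.addEquiv₀.symm.surjective β
  obtain ⟨g, rfl⟩ := hY f
  rw [Abelian.Ext.addEquiv₀_symm_apply, ← Abelian.Ext.mk₀_comp_mk₀, hT.extClass_comp_assoc]

lemma bijective_f_comp_of_subsingleton_ext_one (hT : T.ShortExact) (Y : C)
    [Subsingleton (T.X₃ ⟶ Y)] [Subsingleton (Abelian.Ext T.X₃ Y 1)] :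
    Function.Bijective fun f : T.X₂ ⟶ Y ↦ T.f ≫ f := by
  have := hT.epi_g
  refine ⟨fun f₁ f₂ h ↦ ?_, fun f ↦ ?_⟩
  · obtain ⟨g, hg⟩ := hT.exact.desc' (f₁ - f₂) (by simpa [sub_eq_zero] using h)
    rw [← sub_eq_zero, ← hg, Subsingleton.elim g 0, Limits.comp_zero]
  · obtain ⟨α, hα⟩ := Abelian.Ext.contravariant_sequence_exact₁ hT Y (Abelian.Ext.mk₀ f)
      (add_zero 1) (Subsingleton.elim _ _)
    obtain ⟨g, rfl⟩ := Abelian.Ext.addEquiv₀.symm.surjective α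
    rw [Abelian.Ext.addEquiv₀_symm_apply, Abelian.Ext.mk₀_comp_mk₀] at hα
    exact ⟨g, Abelian.Ext.addEquiv₀.symm.injective hα⟩

lemma subsingleton_ext_X₂ (hT : T.ShortExact) (X : C) (n : ℕ) [Subsingleton (Abelian.Ext X T.X₁ n)]
    [Subsingleton (Abelian.Ext X T.X₃ n)] : Subsingleton (Abelian.Ext X T.X₂ n) := by
  refine subsingleton_of_forall_eq 0 fun α ↦ ?_
  obtain ⟨β, rfl⟩ := Abelian.Ext.covariant_sequence_exact₂ X hT α (Subsingleton.elim _ _)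
  rw [Subsingleton.elim β 0, Abelian.Ext.zero_comp]

variable {R : Type*} [CommRing R] [IsNoetherianRing R] [Linear R C]

lemma finite_ext_X₃ (hT : T.ShortExact) (X : C) (n : ℕ) [Module.Finite R (Abelian.Ext X T.X₂ n)]
    [Module.Finite R (Abelian.Ext X T.X₁ (n + 1))] : Module.Finite R (Abelian.Ext X T.X₃ n) := by
  have h_exact : LinearMap.range ((Abelian.Ext.mk₀ T.g).postcompOfLinear R X (add_zero n)) =
      LinearMap.ker (hT.extClass.postcompOfLinear R X (rfl : n + 1 = n + 1)) := by
    refine le_antisymm ?_ fun γ hγ ↦ Abelian.Ext.covariant_sequence_exact₃ X hT γ rfl hγ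
    rintro _ ⟨β, rfl⟩
    simp
  have := isNoetherian_of_range_eq_ker _ _ h_exact
  infer_instance

lemma finite_ext_succ_X₃ (hT : T.ShortExact) (Y : C) (n : ℕ)
    [Module.Finite R (Abelian.Ext T.X₁ Y n)] [Module.Finite R (Abelian.Ext T.X₂ Y (n + 1))] :
    Module.Finite R (Abelian.Ext T.X₃ Y (n + 1)) := by
  have h_exact : LinearMap.range (hT.extClass.precompOfLinear R Y (add_comm 1 n)) =
      LinearMap.ker ((Abelian.Ext.mk₀ T.g).precompOfLinear R Y (zero_add (n + 1))) := by
    refine le_antisymm ?_ fun γ hγ ↦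
      Abelian.Ext.contravariant_sequence_exact₃ hT Y γ hγ (add_comm 1 n)
    rintro _ ⟨β, rfl⟩
    simp
  have := isNoetherian_of_range_eq_ker _ _ h_exact
  infer_instance

end LongExactSequences

section Comparison

universe t

variable {A : Type t} [Ring A] {C : Type u} [Category.{v} C] [Abelian C] [Linear A C]
  [HasExt.{w} C] {X Y : C} (P : ProjectiveResolution X)

lemma smul_extMk {n m : ℕ} (a : A) (f : P.complex.X n ⟶ Y) (hm : n + 1 = m)
    (hf : P.complex.d m n ≫ f = 0) :
    a • P.extMk f m hm hf = P.extMk (a • f) m hm (by simp [hf]) := by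
  simp [Abelian.Ext.smul_eq_comp_mk₀, P.extMk_comp_mk₀]

variable (A Y) in
/-- The class in `Abelian.Ext` of an `n`-cocycle of the complex `Hom(P, Y)`, as a linear map. Only
the outgoing differential matters for cocycles, so the index `l` of the incoming one is
arbitrary. -/
noncomputable def extOfCocycle (l n : ℕ) :
    LinearMap.ker ((P.complex.linearYonedaObj A Y).sc' l n (n + 1)).g.hom →ₗ[A]
      Abelian.Ext X Y n where
  toFun f := P.extMk f.1 (n + 1) rfl f.2
  map_add' f g := (P.add_extMk f.1 g.1 (n + 1) rfl f.2 g.2).symm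
  map_smul' a f := (smul_extMk P a f.1 rfl f.2).symm

lemma extOfCocycle_surjective (l n : ℕ) : Function.Surjective (extOfCocycle A Y P l n) := fun α ↦
  let ⟨f, hf, hα⟩ := P.extMk_surjective α (n + 1) rfl
  ⟨⟨f, hf⟩, hα⟩

lemma ker_extOfCocycle (n : ℕ) :
    LinearMap.ker (extOfCocycle A Y P n (n + 1)) =
      LinearMap.range
        ((P.complex.linearYonedaObj A Y).sc' n (n + 1) (n + 2)).moduleCatToCycles := by
  ext f
  refine (P.extMk_eq_zero_iff f.1 (n + 2) rfl f.2 n rfl).trans (exists_congr fun g ↦ ?_)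
  exact ⟨fun h ↦ Subtype.ext h, fun h ↦ congrArg Subtype.val h⟩

/-- The comparison in positive degrees between `Ext`, computed by a projective resolution of `X`,
and `Abelian.Ext`, the group of morphisms in the derived category. -/
noncomputable def extEquivAbelianExt [EnoughProjectives C] (X Y : C) (n : ℕ) :
    ((Ext A C (n + 1)).obj (Opposite.op X)).obj Y ≃ₗ[A] Abelian.Ext X Y (n + 1) :=
  let P := projectiveResolution X
  let K := P.complex.linearYonedaObj A Y
  let cohomologyIso := P.isoExt (n + 1) Y ≪≫
    K.homologyIsoSc' n (n + 1) (n + 2) (by simp) (by simp) ≪≫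
    (K.sc' n (n + 1) (n + 2)).moduleCatHomologyIso
  cohomologyIso.toLinearEquiv ≪≫ₗ
    Submodule.quotEquivOfEq _ _ (ker_extOfCocycle P n).symm ≪≫ₗ
    (extOfCocycle A Y P n (n + 1)).quotKerEquivOfSurjective (extOfCocycle_surjective P n (n + 1))

end Comparison

section ExtOfModules

variable {R : Type u} [CommRing R] [Small.{v} R]

lemma subsingleton_ext_succ_of_subsingleton (X : ModuleCat.{v} R) (N : Type v) [AddCommGroup N]
    [Module R N] [Subsingleton N] (n : ℕ) :
    Subsingleton (Abelian.Ext X (ModuleCat.of R N) (n + 1)) :=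
  have := (ModuleCat.isZero_of_subsingleton (ModuleCat.of R N)).injective
  subsingleton_of_forall_eq 0 Abelian.Ext.eq_zero_of_injective

-- In a projective presentation `0 → X' → P → X → 0` the kernel `X'` is flat and stays a submodule
-- of `P` after base change to `K`, so every map `X' → N` extends to `P`.
theorem subsingleton_ext_succ_of_flat (K : Type*) [Field K] [Algebra R K] (X N : ModuleCat.{v} R)
    [Module K N] [IsScalarTower R K N] [Module.Flat R X] (n : ℕ) :
    Subsingleton (Abelian.Ext X N (n + 1)) := by
  induction n generalizing X with
  | zero =>
    have hT := X.shortExact_projectiveShortComplex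
    let p := X.projectiveShortComplex.g.hom
    have hι : Function.Injective ((LinearMap.ker p).subtype.baseChange K) :=
      LinearMap.lTensor_injective_of_exact_of_flat p hT.moduleCat_surjective_g _
        (LinearMap.ker p).subtype_injective (LinearMap.exact_subtype_ker_map p) K
    refine subsingleton_ext_one_of_projective_X₂ hT fun f ↦ ?_
    obtain ⟨g, hg⟩ := exists_comp_eq_of_baseChange_injective hι f.hom
    exact ⟨ModuleCat.ofHom g, ModuleCat.hom_ext hg⟩
  | succ n ih =>
    have hT := X.shortExact_projectiveShortComplex
    have : Module.Flat R X.projectiveShortComplex.X₁ :=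
      flat_ker_of_surjective X.projectiveShortComplex.g.hom hT.moduleCat_surjective_g
    have := ih X.projectiveShortComplex.X₁
    exact subsingleton_ext_succ_of_projective_X₂ hT N (n + 1)

theorem subsingleton_ext_succ_of_isTorsionBySet_pow (I : Ideal R) [I.IsMaximal]
    (X : ModuleCat.{v} R) [Module.Flat R X] (n : ℕ) {k : ℕ} {N : Type v} [AddCommGroup N]
    [Module R N] (hN : Module.IsTorsionBySet R N (I ^ k : Ideal R)) :
    Subsingleton (Abelian.Ext X (ModuleCat.of R N) (n + 1)) := by
  induction k generalizing N with
  | zero =>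
    have : Subsingleton N := subsingleton_of_forall_eq 0 fun x ↦ by
      simpa using @hN x ⟨1, by simp⟩
    exact subsingleton_ext_succ_of_subsingleton X N n
  | succ k ih =>
    let := Ideal.Quotient.field I
    have hT := shortExact_subtype_mkQ (Submodule.torsionBySet R N I)
    have := subsingleton_ext_succ_of_flat (R ⧸ I) X (.of R (Submodule.torsionBySet R N I)) n
    have := ih (isTorsionBySet_quotient_torsionBySet (pow_succ' I k ▸ hN))
    exact subsingleton_ext_X₂ hT X (n + 1)

theorem subsingleton_ext_of_isSMulRegular (X M : ModuleCat.{v} R) (n : ℕ) {x : R}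
    (hx : x ∈ (Module.annihilator R (Abelian.Ext X M n)).jacobson) (hreg : IsSMulRegular M x)
    [Module.Finite R (Abelian.Ext X M n)]
    [hQ : Subsingleton (Abelian.Ext X (ModuleCat.of R (QuotSMulTop x M)) n)] :
    Subsingleton (Abelian.Ext X M n) := by
  by_contra! _
  refine Submodule.top_ne_pointwise_smul_of_mem_jacobson_annihilator hx
    (top_unique fun α _ ↦ ?_).symm
  obtain ⟨β, rfl⟩ := Abelian.Ext.covariant_sequence_exact₂ X hreg.smulShortComplex_shortExact α
    (hQ.elim _ _)
  exact ⟨β, trivial, Abelian.Ext.smul_eq_comp_mk₀ β x⟩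

lemma finite_ext_quotSMulTop [IsNoetherianRing R] (X M : ModuleCat.{v} R) {x : R}
    (hx : IsSMulRegular M x) (n : ℕ) [h : Module.Finite R (Abelian.Ext X M n)]
    [h_succ : Module.Finite R (Abelian.Ext X M (n + 1))] :
    Module.Finite R (Abelian.Ext X (ModuleCat.of R (QuotSMulTop x M)) n) := by
  have : Module.Finite R (Abelian.Ext X (M.smulShortComplex x).X₂ n) := h
  have : Module.Finite R (Abelian.Ext X (M.smulShortComplex x).X₁ (n + 1)) := h_succ
  exact finite_ext_X₃ hx.smulShortComplex_shortExact X n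

end ExtOfModules

section LocalRing

open IsLocalRing

lemma exists_nat_supportDim_lt (R M : Type*) [CommRing R] [IsNoetherianRing R] [IsLocalRing R]
    [AddCommGroup M] [Module R M] : ∃ d : ℕ, Module.supportDim R M < d := by
  obtain ⟨a, ha⟩ := ENat.ne_top_iff_exists.1
    (Ideal.height_ne_top (maximalIdeal.isMaximal R).ne_top)
  refine ⟨a + 1, (Module.supportDim_le_ringKrullDim R M).trans_lt ?_⟩
  rw [← maximalIdeal_height_eq_ringKrullDim, ← ha]
  exact_mod_cast a.lt_succ_self

theorem subsingleton_ext_succ_of_flat_of_finite {R : Type u} [CommRing R] [Small.{v} R]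
    [IsNoetherianRing R] [IsLocalRing R] (X : ModuleCat.{v} R) [Module.Flat R X] (n : ℕ)
    (M : Type v) [AddCommGroup M] [Module R M] [Module.Finite R M]
    (hfin : ∀ i : ℕ, (i + 1 : WithBot ℕ∞) ≤ Module.supportDim R M →
      Module.Finite R (Abelian.Ext X (ModuleCat.of R M) (n + i + 1))) :
    Subsingleton (Abelian.Ext X (ModuleCat.of R M) (n + 1)) := by
  obtain ⟨d, hd⟩ := exists_nat_supportDim_lt R M
  induction d generalizing M with
  | zero =>
    have := (Module.supportDim_eq_bot_iff_subsingleton R M).1 (WithBot.lt_coe_bot.1 hd)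
    exact subsingleton_ext_succ_of_subsingleton X M n
  | succ d ih =>
    obtain ⟨k, x, hx, hreg⟩ := exists_isSMulRegular_quotient_torsionBySet_pow M (maximalIdeal R)
    let Γ := Submodule.torsionBySet R M (maximalIdeal R ^ k : Ideal R)
    have hΓ := shortExact_subtype_mkQ Γ
    have h_extΓ (m) : Subsingleton (Abelian.Ext X (ModuleCat.of R Γ) (m + 1)) :=
      subsingleton_ext_succ_of_isTorsionBySet_pow (maximalIdeal R) X m
        (Submodule.torsionBySet_isTorsionBySet _)
    suffices Subsingleton (Abelian.Ext X (.of R (M ⧸ Γ)) (n + 1)) from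
      subsingleton_ext_X₂ hΓ X (n + 1)
    obtain _ | _ := subsingleton_or_nontrivial (M ⧸ Γ)
    · exact subsingleton_ext_succ_of_subsingleton X (M ⧸ Γ) n
    let Q := QuotSMulTop x (M ⧸ Γ)
    have h_dimQ : Module.supportDim R Q + 1 ≤ Module.supportDim R M :=
      (Module.supportDim_quotSMulTop_succ_eq_supportDim hreg hx).trans_le
        (Module.supportDim_le_of_surjective Γ.mkQ Γ.mkQ_surjective)
    have h_dimQ_nonneg : 0 ≤ Module.supportDim R Q := by
      have := nontrivial_quotSMulTop_of_mem_maximalIdeal (M ⧸ Γ) hx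
      have : Nonempty (Module.support R Q) := Module.nonempty_support_of_nontrivial.to_subtype
      exact Order.krullDim_nonneg
    have h_finite (i : ℕ) (hi : (i : WithBot ℕ∞) ≤ Module.supportDim R Q) :
        Module.Finite R (Abelian.Ext X (ModuleCat.of R (M ⧸ Γ)) (n + i + 1)) :=
      have := hfin i ((add_le_add_left hi 1).trans h_dimQ)
      finite_ext_X₃ hΓ X _
    have : Subsingleton (Abelian.Ext X (.of R Q) (n + 1)) := by
      refine ih Q (fun i hi ↦ ?_) (lt_of_add_lt_add_right (h_dimQ.trans_lt (by exact_mod_cast hd)))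
      have := h_finite i ((le_add_of_nonneg_right zero_le_one).trans hi)
      have := h_finite (i + 1) (by exact_mod_cast hi)
      exact finite_ext_quotSMulTop X (.of R (M ⧸ Γ)) hreg _
    have := h_finite 0 h_dimQ_nonneg
    exact subsingleton_ext_of_isSMulRegular X (.of R (M ⧸ Γ)) (n + 1)
      (maximalIdeal_le_jacobson _ hx) hreg

end LocalRing

section UnitCokernel

lemma subsingleton_linearMap_of_smul_top_eq_top {R X M : Type*} [CommRing R] {I : Ideal R}
    [AddCommGroup X] [AddCommGroup M] [Module R X] [Module R M]
    (hX : I • (⊤ : Submodule R X) = ⊤) [IsHausdorff I M] : Subsingleton (X →ₗ[R] M) := by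
  refine subsingleton_of_forall_eq 0 fun f ↦ ?_
  have h_pow (n : ℕ) : I ^ n • (⊤ : Submodule R X) = ⊤ := by
    induction n with
    | zero => simp
    | succ n ih => rw [pow_succ, Submodule.mul_smul, hX, ih]
  ext c
  refine IsHausdorff.haus ‹_› (f c) fun n ↦ ?_
  rw [SModEq.zero]
  exact Submodule.smul_top_le_comap_smul_top (I ^ n) f ((h_pow n).ge trivial)

lemma smul_top_unitCokernel_eq_top {R S : Type*} [CommRing R] [CommRing S] [Algebra R S]
    {I : Ideal R} (h : ∀ s : S, ∃ r : R, s - algebraMap R S r ∈ I.map (algebraMap R S)) :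
    I • (⊤ : Submodule R (UnitCokernel R S)) = ⊤ := by
  let R' := LinearMap.range (Algebra.linearMap R S)
  have h_sup : R' ⊔ I • ⊤ = ⊤ := by
    refine eq_top_iff.2 fun s _ ↦ ?_
    obtain ⟨r, hr⟩ := h s
    rw [← add_sub_cancel (algebraMap R S r) s]
    refine Submodule.add_mem_sup ⟨r, rfl⟩ (?_ : _ ∈ I • (⊤ : Submodule R S))
    rwa [Ideal.smul_top_eq_map]
  calc I • (⊤ : Submodule R (S ⧸ R'))
    _ = (I • ⊤ : Submodule R S).map R'.mkQ := by
      rw [Submodule.map_smul'', Submodule.map_top, R'.range_mkQ]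
    _ = (R' ⊔ I • ⊤).map R'.mkQ := by rw [Submodule.map_sup, R'.mkQ_map_self, bot_sup_eq]
    _ = ⊤ := by rw [h_sup, Submodule.map_top, R'.range_mkQ]

variable {R S M : Type u} [CommRing R] [CommRing S] [Algebra R S] [AddCommGroup M] [Module R M]

theorem bijective_eval_one_of_subsingleton_ext_one [FaithfulSMul R S]
    [Subsingleton (UnitCokernel R S →ₗ[R] M)]
    [Subsingleton (Abelian.Ext (ModuleCat.of R (UnitCokernel R S)) (ModuleCat.of R M) 1)] :
    Function.Bijective (fun ψ : S →ₗ[R] M ↦ ψ 1) := by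
  have hT := shortExact_mkQ_range (f := Algebra.linearMap R S)
    (FaithfulSMul.algebraMap_injective R S)
  have : Subsingleton (ModuleCat.of R (UnitCokernel R S) ⟶ ModuleCat.of R M) :=
    ModuleCat.homEquiv.subsingleton
  have h_restrict : Function.Bijective fun ψ : S →ₗ[R] M ↦ ψ ∘ₗ Algebra.linearMap R S :=
    (ModuleCat.homEquiv.bijective.comp
      (bijective_f_comp_of_subsingleton_ext_one hT (ModuleCat.of R M))).comp
      ModuleCat.homEquiv.symm.bijective
  convert (LinearMap.ringLmapEquivSelf R R M).bijective.comp h_restrict using 2 with ψ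
  simp

theorem stmt_15_general [IsNoetherianRing R] [IsLocalRing R] [Module.FaithfullyFlat R S]
    (h : ∀ s : S, ∃ r : R,
      s - algebraMap R S r ∈ (IsLocalRing.maximalIdeal R).map (algebraMap R S))
    [Module.Finite R M]
    (hext : ∀ i : ℕ, 1 ≤ i → (i : WithBot ℕ∞) ≤ Module.supportDim R M →
      Module.Finite R
        (((Ext R (ModuleCat R) i).obj (Opposite.op (ModuleCat.of R S))).obj
          (ModuleCat.of R M))) :
    Function.Bijective (fun ψ : S →ₗ[R] M ↦ ψ 1) := by
  have := flat_unitCokernel R S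
  have : Subsingleton (UnitCokernel R S →ₗ[R] M) :=
    subsingleton_linearMap_of_smul_top_eq_top (smul_top_unitCokernel_eq_top h)
  have : Subsingleton
      (Abelian.Ext (ModuleCat.of R (UnitCokernel R S)) (ModuleCat.of R M) (0 + 1)) := by
    refine subsingleton_ext_succ_of_flat_of_finite _ 0 M fun i hi ↦ ?_
    rw [zero_add]
    have := hext (i + 1) i.succ_pos (by exact_mod_cast hi)
    have : Module.Finite R (Abelian.Ext (ModuleCat.of R S) (ModuleCat.of R M) (i + 1)) :=
      .equiv (extEquivAbelianExt _ _ i)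
    have : Module.Finite R (Abelian.Ext (ModuleCat.of R R) (ModuleCat.of R M) i) := inferInstance
    have hT := shortExact_mkQ_range (f := Algebra.linearMap R S)
      (FaithfulSMul.algebraMap_injective R S)
    exact finite_ext_succ_X₃ hT _ i
  exact bijective_eval_one_of_subsingleton_ext_one

end UnitCokernel

theorem stmt_15 (R S : Type) [CommRing R] [CommRing S]
    [IsNoetherianRing R] [IsNoetherianRing S] [IsLocalRing R] [IsLocalRing S]
    [Algebra R S] [Module.Flat R S] [IsLocalHom (algebraMap R S)]
    (h1 : (IsLocalRing.maximalIdeal R).map (algebraMap R S) = IsLocalRing.maximalIdeal S)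
    (h2 : ∀ s : S, ∃ r : R, s - algebraMap R S r ∈ IsLocalRing.maximalIdeal S)
    (M : Type) [AddCommGroup M] [Module R M] [Module.Finite R M]
    (hext : ∀ i : ℕ, 1 ≤ i → (i : WithBot ℕ∞) ≤ Order.krullDim (Module.support R M) →
      Module.Finite R
        (((Ext R (ModuleCat R) i).obj (Opposite.op (ModuleCat.of R S))).obj
          (ModuleCat.of R M))) :
    Function.Bijective (fun ψ : S →ₗ[R] M => ψ 1) := by
  have := Module.FaithfullyFlat.of_flat_of_isLocalHom (A := R) (B := S)
  exact stmt_15_general (h1 ▸ h2) hext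
end

section
/- Let φ: R → S be a flat local homomorphism of Noetherian local rings, and suppose S is separable over R, i.e., the multiplication map S ⊗_R S → S splits as a map of S⊗_RS-modules. Then every finitely generated S-module N is a direct summand of an extended module: there is a finitely generated R-module M such that N is a direct summand of S ⊗_R M as an S-module. -/
/-!
Let `e = ∑ aᵢ ⊗ bᵢ` be the image of `1` under the splitting. For every `S`-module `N` the map
`n ↦ ∑ aᵢ ⊗ bᵢ n` is an `S`-linear section of the action map `S ⊗[R] N → N`. Now `S ⊗[R] N` is
the filtered colimit of the modules `S ⊗[R] M`, with `M` running over the finitely generated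
`R`-submodules of `N`. If `N` is finitely presented over `S`, the images of its finitely many
generators lift to `S ⊗[R] M` for some `M`, and after enlarging `M` its finitely many relations
hold there as well; so the section factors through `S ⊗[R] M`, of which `N` is then a direct
summand.
-/

open TensorProduct

section FilteredColimit

variable {R A N : Type*} [CommRing R] [Ring A] [Algebra R A] [AddCommGroup N] [Module R N]

lemma exists_fg_baseChange_inclusion_eq_zero {P : Submodule R N} (hP : P.FG) {t : A ⊗[R] P}
    (ht : P.subtype.baseChange A t = 0) :
    ∃ (Q : Submodule R N) (hPQ : P ≤ Q),
      Q.FG ∧ (Submodule.inclusion hPQ).baseChange A t = 0 := by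
  classical
  have h_colimit := Submodule.FG.lTensor.directLimit_apply' R A N P hP t
  rw [← LinearMap.baseChange_eq_ltensor, ht, EmbeddingLike.map_eq_zero_iff] at h_colimit
  obtain ⟨Q, hPQ, hQ⟩ := Module.DirectLimit.of.zero_exact h_colimit
  exact ⟨Q, hPQ, Q.2, hQ⟩

lemma exists_fg_le_ker_baseChange_inclusion {P : Submodule R N} (hP : P.FG)
    {K : Submodule A (A ⊗[R] P)} (hK : K.FG)
    (hKP : K ≤ LinearMap.ker (P.subtype.baseChange A)) :
    ∃ (Q : Submodule R N) (hPQ : P ≤ Q),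
      Q.FG ∧ K ≤ LinearMap.ker ((Submodule.inclusion hPQ).baseChange A) := by
  have h_mono {Q Q' : Submodule R N} (hPQ : P ≤ Q) (hQQ' : Q ≤ Q') :
      LinearMap.ker ((Submodule.inclusion hPQ).baseChange A) ≤
        LinearMap.ker ((Submodule.inclusion (hPQ.trans hQQ')).baseChange A) := by
    rw [show Submodule.inclusion (hPQ.trans hQQ') =
      Submodule.inclusion hQQ' ∘ₗ Submodule.inclusion hPQ from rfl, LinearMap.baseChange_comp]
    exact LinearMap.ker_le_ker_comp _ _
  induction K, hK using Submodule.fg_induction with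
  | singleton t =>
    simp only [Submodule.span_singleton_le_iff_mem, LinearMap.mem_ker] at hKP ⊢
    exact exists_fg_baseChange_inclusion_eq_zero hP hKP
  | sup K₁ K₂ _ _ ih₁ ih₂ =>
    obtain ⟨Q₁, hPQ₁, hQ₁, hK₁⟩ := ih₁ (le_sup_left.trans hKP)
    obtain ⟨Q₂, hPQ₂, hQ₂, hK₂⟩ := ih₂ (le_sup_right.trans hKP)
    exact ⟨Q₁ ⊔ Q₂, hPQ₁.trans le_sup_left, hQ₁.sup hQ₂,
      sup_le (hK₁.trans (h_mono hPQ₁ le_sup_left)) (hK₂.trans (h_mono hPQ₂ le_sup_right))⟩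

lemma exists_fg_lift_baseChange_of_projective {F : Type*} [AddCommGroup F] [Module A F]
    [Module.Finite A F] [Module.Projective A F] (f : F →ₗ[A] A ⊗[R] N) :
    ∃ P : Submodule R N, P.FG ∧
      ∃ g : F →ₗ[A] A ⊗[R] P, P.subtype.baseChange A ∘ₗ g = f := by
  obtain ⟨t, ht⟩ := Module.Finite.fg_top (R := A) (M := F)
  obtain ⟨P, hP, htP⟩ := TensorProduct.exists_finite_submodule_right_of_setFinite
    (f '' t) (t.finite_toSet.image f)
  have h_range : LinearMap.range f ≤ LinearMap.range (P.subtype.baseChange A) := by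
    rw [LinearMap.range_eq_map, ← ht, Submodule.map_span, Submodule.span_le]
    exact htP
  obtain ⟨g, hg⟩ := Module.projective_lifting_property (P.subtype.baseChange A).rangeRestrict
    (f.codRestrict _ fun x => h_range (LinearMap.mem_range_self f x))
    (LinearMap.surjective_rangeRestrict _)
  exact ⟨P, Module.Finite.iff_fg.mp hP, g,
    LinearMap.ext fun x => congrArg Subtype.val (LinearMap.congr_fun hg x)⟩

lemma exists_fg_lift_baseChange {E : Type*} [AddCommGroup E] [Module A E]
    [Module.FinitePresentation A E] (f : E →ₗ[A] A ⊗[R] N) :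
    ∃ P : Submodule R N, P.FG ∧
      ∃ g : E →ₗ[A] A ⊗[R] P, P.subtype.baseChange A ∘ₗ g = f := by
  obtain ⟨n, K, e, hK⟩ := Module.FinitePresentation.exists_fin A E
  obtain ⟨P, hP, g, hg⟩ := exists_fg_lift_baseChange_of_projective (f ∘ₗ e.symm ∘ₗ K.mkQ)
  have hgK : K.map g ≤ LinearMap.ker (P.subtype.baseChange A) := by
    rw [Submodule.map_le_iff_le_comap, ← LinearMap.ker_comp, hg, ← LinearMap.comp_assoc]
    exact K.ker_mkQ.ge.trans (LinearMap.ker_le_ker_comp _ _)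
  obtain ⟨Q, hPQ, hQ, hKQ⟩ :=
    exists_fg_le_ker_baseChange_inclusion hP (hK.map g) hgK
  rw [Submodule.map_le_iff_le_comap, ← LinearMap.ker_comp] at hKQ
  refine ⟨Q, hQ, K.liftQ _ hKQ ∘ₗ e, ?_⟩
  have h_lift : Q.subtype.baseChange A ∘ₗ K.liftQ _ hKQ = f ∘ₗ e.symm := by
    apply Submodule.linearMap_qext
    rw [LinearMap.comp_assoc, Submodule.liftQ_mkQ, ← LinearMap.comp_assoc,
      ← LinearMap.baseChange_comp, Submodule.subtype_comp_inclusion, hg, LinearMap.comp_assoc]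
  rw [← LinearMap.comp_assoc, h_lift, LinearMap.comp_assoc, LinearEquiv.symm_comp,
    LinearMap.comp_id]

end FilteredColimit

section Separable

variable {R S : Type*} [CommRing R] [CommRing S] [Algebra R S]

/-- A separability idempotent of the `R`-algebra `S`: an element of `S ⊗[R] S` on which the two
actions of `S` agree and which multiplication sends to `1`. -/
structure IsSeparabilityIdempotent (e : S ⊗[R] S) : Prop where
  one_tmul_mul (s : S) : (1 ⊗ₜ s) * e = (s ⊗ₜ 1) * e
  lmul'_eq_one : Algebra.TensorProduct.lmul' R e = 1

lemma isSeparabilityIdempotent_of_splitting {σ : S →ₗ[R] S ⊗[R] S}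
    (h_one : Algebra.TensorProduct.lmul' R (σ 1) = 1)
    (hσ : ∀ (z : S ⊗[R] S) (x : S), σ (Algebra.TensorProduct.lmul' R z * x) = z * σ x) :
    IsSeparabilityIdempotent (σ 1) where
  one_tmul_mul s := by simp only [← hσ, Algebra.TensorProduct.lmul'_apply_tmul, one_mul, mul_one]
  lmul'_eq_one := h_one

variable {N : Type*} [AddCommGroup N] [Module R N] [Module S N] [IsScalarTower R S N]

variable (R S N) in
/-- The action of `S ⊗[R] S` on `S ⊗[R] N` through both tensor factors:
`a ⊗ b` sends `s ⊗ n` to `a * s ⊗ b • n`. -/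
noncomputable def tensorAction : S ⊗[R] S →ₐ[S] Module.End S (S ⊗[R] N) :=
  Algebra.TensorProduct.lift (Algebra.ofId S _)
    ((Module.End.baseChangeHom R S N).comp (Algebra.lsmul R R N))
    fun s _ => Algebra.commute_algebraMap_left s _

@[simp]
lemma tensorAction_tmul_tmul (a b s : S) (n : N) :
    tensorAction R S N (a ⊗ₜ b) (s ⊗ₜ n) = (a * s) ⊗ₜ (b • n) :=
  rfl

variable (R S N) in
/-- The action map `S ⊗[R] N → N`, `s ⊗ n ↦ s • n`. -/
noncomputable def actionMap : S ⊗[R] N →ₗ[S] N :=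
  (LinearMap.id : N →ₗ[R] N).liftBaseChange S

lemma actionMap_tensorAction_one_tmul (z : S ⊗[R] S) (n : N) :
    actionMap R S N (tensorAction R S N z (1 ⊗ₜ n)) = Algebra.TensorProduct.lmul' R z • n := by
  induction z with
  | zero => simp
  | add x y hx hy => simp only [map_add, LinearMap.add_apply, add_smul, hx, hy]
  | tmul a b => simp [actionMap, smul_smul]

namespace IsSeparabilityIdempotent

variable {e : S ⊗[R] S} (he : IsSeparabilityIdempotent e)
include he

lemma tensorAction_one_tmul_smul (s : S) (n : N) :
    tensorAction R S N e (1 ⊗ₜ (s • n)) = s • tensorAction R S N e (1 ⊗ₜ n) :=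
  calc tensorAction R S N e (1 ⊗ₜ (s • n))
    _ = tensorAction R S N (e * 1 ⊗ₜ s) (1 ⊗ₜ n) := by simp [Module.End.mul_apply]
    _ = tensorAction R S N (s • e) (1 ⊗ₜ n) := by
      rw [mul_comm, he.one_tmul_mul, Algebra.smul_def, Algebra.TensorProduct.algebraMap_apply,
        Algebra.algebraMap_self_apply]
    _ = s • tensorAction R S N e (1 ⊗ₜ n) := by rw [map_smul, LinearMap.smul_apply]

lemma exists_section_actionMap :
    ∃ f : N →ₗ[S] S ⊗[R] N, actionMap R S N ∘ₗ f = LinearMap.id := by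
  let f : N →ₗ[S] S ⊗[R] N :=
    { toFun n := tensorAction R S N e (1 ⊗ₜ n)
      map_add' m n := by rw [tmul_add, map_add]
      map_smul' := he.tensorAction_one_tmul_smul }
  refine ⟨f, LinearMap.ext fun n => ?_⟩
  exact (actionMap_tensorAction_one_tmul e n).trans (by rw [he.lmul'_eq_one, one_smul]; rfl)

theorem exists_fg_retract_baseChange [Module.FinitePresentation S N] :
    ∃ M : Submodule R N, M.FG ∧
      ∃ (i : N →ₗ[S] S ⊗[R] M) (p : S ⊗[R] M →ₗ[S] N), p ∘ₗ i = LinearMap.id := by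
  obtain ⟨f, hf⟩ := he.exists_section_actionMap (N := N)
  obtain ⟨M, hM, i, hi⟩ := exists_fg_lift_baseChange f
  exact ⟨M, hM, i, actionMap R S N ∘ₗ M.subtype.baseChange S, by
    rw [LinearMap.comp_assoc, hi, hf]⟩

end IsSeparabilityIdempotent

end Separable

universe u

theorem stmt_19_general {R S : Type*} {N : Type u} [CommRing R] [CommRing S] [Algebra R S]
    (hsep : ∃ σ : S →ₗ[R] S ⊗[R] S,
      (∀ x : S, Algebra.TensorProduct.lmul' R (σ x) = x) ∧
      (∀ (z : S ⊗[R] S) (x : S), σ (Algebra.TensorProduct.lmul' R z * x) = z * σ x))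
    [AddCommGroup N] [Module S N] [Module.FinitePresentation S N] :
    ∃ (M : Type u) (_ : AddCommGroup M) (_ : Module R M),
      Module.Finite R M ∧
      ∃ (i : N →ₗ[S] S ⊗[R] M) (p : S ⊗[R] M →ₗ[S] N), p.comp i = LinearMap.id := by
  obtain ⟨σ, hσ_section, hσ_linear⟩ := hsep
  let _ : Module R N := Module.compHom N (algebraMap R S)
  have : IsScalarTower R S N := IsScalarTower.of_algebraMap_smul fun _ _ => rfl
  have he := isSeparabilityIdempotent_of_splitting (hσ_section 1) hσ_linear
  obtain ⟨M, hM, h_retract⟩ := he.exists_fg_retract_baseChange (N := N)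
  exact ⟨M, inferInstance, inferInstance, Module.Finite.iff_fg.mpr hM, h_retract⟩

theorem stmt_19 (R S : Type) [CommRing R] [CommRing S]
    [IsNoetherianRing R] [IsNoetherianRing S] [IsLocalRing R] [IsLocalRing S]
    [Algebra R S] [Module.Flat R S] [IsLocalHom (algebraMap R S)]
    -- separability: the multiplication map S ⊗[R] S → S splits S⊗S-linearly
    (hsep : ∃ σ : S →ₗ[R] S ⊗[R] S,
      (∀ x : S, Algebra.TensorProduct.lmul' R (σ x) = x) ∧
      (∀ (z : S ⊗[R] S) (x : S), σ (Algebra.TensorProduct.lmul' R z * x) = z * σ x))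
    (N : Type) [AddCommGroup N] [Module S N] [Module.Finite S N] :
    ∃ (M : Type) (_ : AddCommGroup M) (_ : Module R M),
      Module.Finite R M ∧
      ∃ (i : N →ₗ[S] S ⊗[R] M) (p : S ⊗[R] M →ₗ[S] N), p.comp i = LinearMap.id := by
  have := Module.finitePresentation_of_finite S N
  exact stmt_19_general hsep
end
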